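/- For every n ≥ 1, (n+1)^(n−1) = Σ over compositions I = (i₁,…,i_r) of n of [ n!/(i₁!⋯i_r!) · ∏_{k=1}^{r} (i_k − 1)^(i_k − 1) ], with the convention 0^0 = 1. -/

import Mathlib

/-!
Write `A_n(x) = x (x + n)^(n - 1)` for the Abel polynomials, with `A_0 = 1`. They are of binomial
type, `A_n(x + y) = ∑ C(n, i) A_i(x) A_(n-i)(y)`, so the exponential generating functions of
`A_n(x)` and `A_n(-x)` are inverse to each other. Expanding `1 / (1 - B)` with
`B = -∑_{n ≥ 1} A_n(-x) t^n / n!` as a geometric series writes `A_n(x)` as a sum over compositions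
with block weights `-A_i(-x) = x (i - x)^(i - 1)`; the theorem is the case `x = 1`.
-/

open Finset hiding antidiagonal mem_antidiagonal
open Finset.HasAntidiagonal

section BinomialConvolution

theorem sum_antidiagonal_antidiagonal_assoc {A M : Type*} [AddMonoid A] [HasAntidiagonal A]
    [AddCommMonoid M] (f : A → A → A → M) (a : A) :
    ∑ p ∈ antidiagonal a, ∑ q ∈ antidiagonal p.2, f p.1 q.1 q.2 =
      ∑ p ∈ antidiagonal a, ∑ q ∈ antidiagonal p.1, f q.1 q.2 p.2 := by
  simp only [sum_sigma']
  refine sum_nbij' (fun ⟨⟨i, _⟩, ⟨j, k⟩⟩ => ⟨(i + j, k), (i, j)⟩)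
    (fun ⟨⟨_, k⟩, ⟨i, j⟩⟩ => ⟨(i, j + k), (j, k)⟩) ?_ ?_ ?_ ?_ ?_ <;>
  · rintro ⟨⟨_, _⟩, ⟨_, _⟩⟩ h
    simp only [mem_sigma, mem_antidiagonal] at h
    obtain ⟨rfl, rfl⟩ := h
    simp [add_assoc]

theorem choose_mul_choose_eq_choose_add_mul_choose (i j k : ℕ) :
    (i + j + k).choose i * (j + k).choose j = (i + j + k).choose (i + j) * (i + j).choose i := by
  rw [Nat.choose_mul (Nat.le_add_right i j), add_assoc, Nat.add_sub_cancel_left,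
    Nat.add_sub_cancel_left]

theorem sum_antidiagonal_choose_mul_choose_nsmul_assoc {M : Type*} [AddCommMonoid M]
    (f : ℕ → ℕ → ℕ → M) (n : ℕ) :
    ∑ p ∈ antidiagonal n, ∑ q ∈ antidiagonal p.2,
        (n.choose p.1 * p.2.choose q.1) • f p.1 q.1 q.2 =
      ∑ p ∈ antidiagonal n, ∑ q ∈ antidiagonal p.1,
        (n.choose p.1 * p.1.choose q.1) • f q.1 q.2 p.2 := by
  calc
    _ = ∑ p ∈ antidiagonal n, ∑ q ∈ antidiagonal p.2,
          (n.choose p.1 * (q.1 + q.2).choose q.1) • f p.1 q.1 q.2 :=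
      sum_congr rfl fun p _ => sum_congr rfl fun q hq => by rw [mem_antidiagonal.1 hq]
    _ = ∑ p ∈ antidiagonal n, ∑ q ∈ antidiagonal p.1,
          (n.choose q.1 * (q.2 + p.2).choose q.2) • f q.1 q.2 p.2 :=
      sum_antidiagonal_antidiagonal_assoc
        (fun i j k => (n.choose i * (j + k).choose j) • f i j k) n
    _ = _ := by
      refine sum_congr rfl fun p hp => sum_congr rfl fun q hq => ?_
      rw [← mem_antidiagonal.1 hp, ← mem_antidiagonal.1 hq,
        choose_mul_choose_eq_choose_add_mul_choose]

end BinomialConvolution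

section AbelPolynomial

variable {R : Type*}

/-- The Abel polynomial `x (x + n)^(n - 1)`, as a function of `x` and `n`. At `n = 0` it is `1`,
which the formula with truncated subtraction would not give. -/
def abelPow [Semiring R] (x : R) : ℕ → R
  | 0 => 1
  | n + 1 => x * (x + (n + 1 : ℕ)) ^ n

@[simp]
theorem abelPow_zero [Semiring R] (x : R) : abelPow x 0 = 1 := rfl

theorem abelPow_succ [Semiring R] (x : R) (n : ℕ) :
    abelPow x (n + 1) = x * (x + (n + 1 : ℕ)) ^ n := rfl

theorem abelPow_of_pos [Semiring R] (x : R) {n : ℕ} (hn : 0 < n) :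
    abelPow x n = x * (x + n) ^ (n - 1) := by
  obtain ⟨n, rfl⟩ := Nat.exists_eq_add_one.2 hn
  rw [abelPow_succ, Nat.add_sub_cancel]

theorem abelPow_mul_add_pow [Semiring R] (x : R) {i j n : ℕ} (h : i + j = n + 1) :
    abelPow x i * (x + i) ^ j = x * (x + i) ^ n := by
  rcases i with _ | i
  · obtain rfl : j = n + 1 := by omega
    simp [pow_succ']
  · obtain rfl : i + j = n := by omega
    rw [abelPow_succ, mul_assoc, ← pow_add]

variable [CommRing R]

theorem abelPow_eq_pow_sub_mul_pow (x : R) (n : ℕ) :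
    abelPow x n = (x + n) ^ n - n * (x + n) ^ (n - 1) := by
  rcases n with _ | n
  · simp
  · rw [abelPow_succ, Nat.add_sub_cancel, pow_succ']
    ring

theorem sum_antidiagonal_choose_mul_abelPow_mul_neg_pow (x : R) (n : ℕ) :
    ∑ p ∈ antidiagonal n, (n.choose p.1 : R) * abelPow x p.1 * (-(x + p.1)) ^ p.2 = 0 ^ n := by
  rcases n with _ | n
  · simp
  -- Up to the factor `x`, the sum is the `(n + 1)`-st forward difference of `t ↦ t ^ n` at `x`.
  have hdiff : ∑ k ∈ range (n + 2),
      (-1) ^ (n + 1 - k) * ((n + 1).choose k : R) * (x + k) ^ n = 0 := by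
    simpa [fwdDiff_iter_eq_sum_shift] using
      congrFun (fwdDiff_iter_pow_eq_zero_of_lt (R := R) n.lt_succ_self) x
  calc
    _ = ∑ p ∈ antidiagonal (n + 1),
          x * ((-1) ^ p.2 * ((n + 1).choose p.1 : R) * (x + p.1) ^ n) := by
      refine sum_congr rfl fun p hp => ?_
      rw [neg_pow]
      linear_combination ((n + 1).choose p.1 : R) * (-1) ^ p.2 *
        abelPow_mul_add_pow x (mem_antidiagonal.1 hp)
    _ = 0 ^ (n + 1) := by
      rw [← mul_sum, Nat.sum_antidiagonal_eq_sum_range_succ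
        (fun i j => (-1) ^ j * ((n + 1).choose i : R) * (x + i) ^ n), hdiff, mul_zero,
        zero_pow n.succ_ne_zero]

/-- **Abel's binomial theorem** -/
theorem add_add_natCast_pow_eq_sum_abelPow (x y : R) (n : ℕ) :
    (x + y + n) ^ n =
      ∑ p ∈ antidiagonal n, (n.choose p.1 : R) * abelPow x p.1 * (y + p.2) ^ p.2 := by
  -- Expanding `y + j = -(x + i) + z` leaves `z ^ n`: the inner sums for lower powers of `z` vanish.
  set z := x + y + n with hz
  symm
  calc
    _ = ∑ p ∈ antidiagonal n, ∑ q ∈ antidiagonal p.2, (n.choose p.1 * p.2.choose q.1) •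
          (abelPow x p.1 * (-(x + p.1)) ^ q.1 * z ^ q.2) := by
      refine sum_congr rfl fun p hp => ?_
      have hyz : y + p.2 = -(x + p.1) + z := by
        rw [hz, ← mem_antidiagonal.1 hp, Nat.cast_add]
        ring
      rw [hyz, (Commute.all _ _).add_pow', mul_sum]
      refine sum_congr rfl fun q _ => ?_
      simp only [nsmul_eq_mul, Nat.cast_mul]
      ring
    _ = ∑ p ∈ antidiagonal n, ∑ q ∈ antidiagonal p.1, (n.choose p.1 * p.1.choose q.1) •
          (abelPow x q.1 * (-(x + q.1)) ^ q.2 * z ^ p.2) :=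
      sum_antidiagonal_choose_mul_choose_nsmul_assoc
        (fun i j k => abelPow x i * (-(x + i)) ^ j * z ^ k) n
    _ = ∑ p ∈ antidiagonal n, (n.choose p.1 : R) * z ^ p.2 * 0 ^ p.1 := by
      refine sum_congr rfl fun p _ => ?_
      rw [← sum_antidiagonal_choose_mul_abelPow_mul_neg_pow x, mul_sum]
      refine sum_congr rfl fun q _ => ?_
      simp only [nsmul_eq_mul, Nat.cast_mul]
      ring
    _ = z ^ n := by
      rcases n with _ | n
      · simp
      · simp [Nat.sum_antidiagonal_succ]

theorem natCast_mul_add_add_natCast_pow_eq_sum_abelPow (x y : R) (n : ℕ) :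
    n * (x + y + n) ^ (n - 1) =
      ∑ p ∈ antidiagonal n,
        (n.choose p.1 : R) * abelPow x p.1 * (p.2 * (y + p.2) ^ (p.2 - 1)) := by
  rcases n with _ | n
  · simp
  have hshift : x + y + (n + 1 : ℕ) = x + (y + 1) + n := by
    push_cast
    ring
  rw [Nat.add_sub_cancel, hshift, add_add_natCast_pow_eq_sum_abelPow, mul_sum,
    Nat.sum_antidiagonal_succ']
  simp only [Nat.cast_zero, zero_mul, mul_zero, zero_add, Nat.add_sub_cancel]
  refine sum_congr rfl fun p hp => ?_
  have hchoose : (n.choose p.1 : R) * (n + 1) = (n + 1).choose p.1 * (p.2 + 1) := by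
    have h := Nat.choose_mul_succ_eq n p.1
    rw [← mem_antidiagonal.1 hp, add_assoc, Nat.add_sub_cancel_left, ← add_assoc,
      mem_antidiagonal.1 hp] at h
    exact_mod_cast congrArg (Nat.cast (R := R)) h
  push_cast
  rw [add_right_comm y 1, ← add_assoc]
  linear_combination abelPow x p.1 * (y + p.2 + 1) ^ p.2 * hchoose

theorem abelPow_add (x y : R) (n : ℕ) :
    abelPow (x + y) n =
      ∑ p ∈ antidiagonal n, (n.choose p.1 : R) * abelPow x p.1 * abelPow y p.2 := by
  simp_rw [abelPow_eq_pow_sub_mul_pow (x + y), abelPow_eq_pow_sub_mul_pow y, mul_sub,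
    sum_sub_distrib, ← natCast_mul_add_add_natCast_pow_eq_sum_abelPow,
    ← add_add_natCast_pow_eq_sum_abelPow]

end AbelPolynomial

section Multinomial

theorem multinomial_nil : ([] : List ℕ).multinomial = 1 :=
  Multiset.multinomial_zero

theorem prod_map_factorial_mul_multinomial (l : List ℕ) :
    (l.map Nat.factorial).prod * l.multinomial = l.sum.factorial := by
  induction l with
  | nil => exact multinomial_nil
  | cons a l ih =>
    rw [List.map_cons, List.prod_cons, List.multinomial_cons, List.sum_cons,
      ← Nat.add_choose_mul_factorial_mul_factorial, ← ih, Nat.choose_symm_add]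
    ring

theorem factorial_sum_div_prod_map_factorial (l : List ℕ) :
    l.sum.factorial / (l.map Nat.factorial).prod = l.multinomial :=
  Nat.div_eq_of_eq_mul_right (List.prod_pos (by simp [Nat.factorial_pos]))
    (prod_map_factorial_mul_multinomial l).symm

end Multinomial

section Composition

theorem sum_composition_succ {M : Type*} [AddCommMonoid M] (f : List ℕ → M) (n : ℕ) :
    ∑ c : Composition (n + 1), f c.blocks =
      ∑ p ∈ antidiagonal n, ∑ c : Composition p.2, f ((p.1 + 1) :: c.blocks) := by
  rw [sum_sigma']
  symm
  refine sum_bij (fun q hq => ⟨(q.1.1 + 1) :: q.2.blocks, ?_, ?_⟩) ?_ ?_ ?_ ?_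
  · rintro j (_ | ⟨_, hj⟩)
    exacts [Nat.succ_pos _, q.2.blocks_pos hj]
  · rw [List.sum_cons, q.2.blocks_sum, add_right_comm, mem_antidiagonal.1 (mem_sigma.1 hq).1]
  · exact fun _ _ => mem_univ _
  · rintro ⟨⟨i, j⟩, c⟩ _ ⟨⟨i', j'⟩, c'⟩ _ h
    obtain ⟨hi, hc : c.blocks = c'.blocks⟩ := List.cons.inj (Composition.ext_iff.1 h)
    obtain rfl : j = j' := c.blocks_sum.symm.trans (hc ▸ c'.blocks_sum)
    obtain rfl : i = i' := Nat.succ_injective hi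
    obtain rfl := Composition.ext hc
    rfl
  · rintro ⟨_ | ⟨a, l⟩, hpos, hsum⟩ _
    · cases hsum
    · have ha : 0 < a := hpos List.mem_cons_self
      refine ⟨⟨(a - 1, l.sum), ⟨l, fun hj => hpos (List.mem_cons_of_mem a hj), rfl⟩⟩, ?_, ?_⟩
      · rw [List.sum_cons] at hsum
        simp only [mem_sigma, mem_antidiagonal, mem_univ, and_true]
        omega
      · simp [Nat.sub_add_cancel ha]
  · exact fun _ _ => rfl

theorem sum_composition_multinomial_mul_prod_succ {R : Type*} [CommSemiring R] (b : ℕ → R)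
    (n : ℕ) :
    ∑ c : Composition (n + 1), (c.blocks.multinomial : R) * (c.blocks.map b).prod =
      ∑ p ∈ antidiagonal n, ((n + 1).choose (p.1 + 1) : R) * b (p.1 + 1) *
        ∑ c : Composition p.2, (c.blocks.multinomial : R) * (c.blocks.map b).prod := by
  rw [sum_composition_succ fun l => (l.multinomial : R) * (l.map b).prod]
  refine sum_congr rfl fun p hp => ?_
  rw [mul_sum]
  refine sum_congr rfl fun c _ => ?_
  rw [List.multinomial_cons, c.blocks_sum, add_right_comm, mem_antidiagonal.1 hp, List.map_cons,
    List.prod_cons, Nat.cast_mul]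
  ring

theorem eq_sum_composition_of_sum_antidiagonal_eq_zero {R : Type*} [CommRing R] {a b : ℕ → R}
    (ha : a 0 = 1) (hb : b 0 = 1)
    (hab : ∀ n, ∑ p ∈ antidiagonal (n + 1), ((n + 1).choose p.1 : R) * b p.1 * a p.2 = 0)
    (n : ℕ) :
    a n = ∑ c : Composition n,
      (c.blocks.multinomial : R) * (c.blocks.map fun i => -b i).prod := by
  induction n using Nat.strong_induction_on with
  | _ n ih =>
    rcases n with _ | n
    · simp [(Composition.blocks_eq_nil _).2, ha, composition_card, multinomial_nil]
    have hrec : a (n + 1) =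
        ∑ p ∈ antidiagonal n, ((n + 1).choose (p.1 + 1) : R) * -b (p.1 + 1) * a p.2 := by
      have h := hab n
      rw [Nat.sum_antidiagonal_succ] at h
      simpa [hb] using eq_neg_of_add_eq_zero_left h
    rw [hrec, sum_composition_multinomial_mul_prod_succ]
    refine sum_congr rfl fun p hp => ?_
    rw [ih p.2 (Nat.lt_succ_of_le (antidiagonal.snd_le hp))]

theorem natCast_prod_map_blocks_pred_pow_pred {R : Type*} [Ring R] {n : ℕ}
    (I : Composition n) :
    (((I.blocks.map fun i => (i - 1) ^ (i - 1)).prod : ℕ) : R) =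
      (I.blocks.map fun i : ℕ => 1 * ((i : R) - 1) ^ (i - 1)).prod := by
  rw [Nat.cast_list_prod, List.map_map]
  exact congrArg List.prod <| List.map_congr_left fun i hi => by
    simp [Nat.cast_pred (I.blocks_pos hi)]

end Composition

theorem sum_over_compositions_eq_general {R : Type*} [CommRing R] (x : R) (n : ℕ) (hn : 1 ≤ n) :
    x * (x + n) ^ (n - 1) =
      ∑ I : Composition n,
        ((Nat.factorial n / (I.blocks.map Nat.factorial).prod : ℕ) : R) *
          (I.blocks.map fun i : ℕ => x * ((i : R) - x) ^ (i - 1)).prod := by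
  have hinv (m : ℕ) : ∑ p ∈ antidiagonal (m + 1),
      ((m + 1).choose p.1 : R) * abelPow (-x) p.1 * abelPow x p.2 = 0 := by
    rw [← abelPow_add, neg_add_cancel, abelPow_succ, zero_mul]
  rw [← abelPow_of_pos x hn,
    eq_sum_composition_of_sum_antidiagonal_eq_zero (abelPow_zero x) (abelPow_zero (-x)) hinv]
  refine sum_congr rfl fun I _ => ?_
  have hblocks : (I.blocks.map fun i => -abelPow (-x) i) =
      I.blocks.map fun i : ℕ => x * ((i : R) - x) ^ (i - 1) :=
    List.map_congr_left fun i hi => by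
      rw [abelPow_of_pos (-x) (I.blocks_pos hi), neg_mul, neg_neg, neg_add_eq_sub]
  rw [hblocks, ← factorial_sum_div_prod_map_factorial, I.blocks_sum]

theorem sum_over_compositions_eq (n : ℕ) (hn : 1 ≤ n) :
    (n + 1) ^ (n - 1) =
      ∑ I : Composition n,
        (Nat.factorial n / (I.blocks.map Nat.factorial).prod) *
          (I.blocks.map fun i => (i - 1) ^ (i - 1)).prod := by
  have h := sum_over_compositions_eq_general (1 : ℤ) n hn
  simp_rw [← natCast_prod_map_blocks_pred_pow_pred, one_mul, add_comm (1 : ℤ)] at h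
  exact_mod_cast h
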